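/- arXiv:2111.04387 — 2 statements merged into one kernel-verified Lean document; each statement's English description precedes it below -/
import Mathlib

section
/- Fix an odd square-free integer t ≥ 3. The set of square-free negative integers d such that d is the square-free part of 1 − 2q^{rt} for some odd prime q and positive integer r (so that ℚ(√d) = ℚ(√(1 − 2(q^r)^t)) and t divides the class number of ℚ(√d)) is infinite; i.e., the family of imaginary quadratic fields ℚ(√(1 − 2m^t)) with m an odd prime power, whose class numbers are all divisible by t, is an infinite family. -/
open Polynomial NumberField

/-- A fixed choice of complex square root of the integer `d`. -/
noncomputable def sqrtC (d : ℤ) : ℂ := (d : ℂ) ^ ((1 : ℂ) / 2)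

lemma sqrtC_sq (d : ℤ) : sqrtC d ^ 2 = (d : ℂ) := by
  unfold sqrtC
  rcases eq_or_ne (d : ℂ) 0 with h | h
  · rw [h, Complex.zero_cpow (by norm_num : (1 : ℂ) / 2 ≠ 0)]
    simp
  · rw [pow_two, ← Complex.cpow_add _ _ h]
    norm_num

lemma isIntegral_sqrtC (d : ℤ) : IsIntegral ℚ (sqrtC d) := by
  refine ⟨X ^ 2 - C (d : ℚ), monic_X_pow_sub_C _ two_ne_zero, ?_⟩
  have : (Polynomial.aeval (sqrtC d)) (X ^ 2 - C (d : ℚ)) = 0 := by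
    simp [sqrtC_sq]
  simpa [Polynomial.aeval_def] using this

/-- The (number) field `ℚ(√d)`, realized as a subfield of `ℂ`. -/
noncomputable def Qsqrt (d : ℤ) : IntermediateField ℚ ℂ :=
  IntermediateField.adjoin ℚ {sqrtC d}

instance (d : ℤ) : FiniteDimensional ℚ (Qsqrt d) :=
  IntermediateField.adjoin.finiteDimensional (isIntegral_sqrtC d)

instance (d : ℤ) : NumberField (Qsqrt d) := ⟨⟩


/-- The complex square root of a negative integer is purely imaginary. -/
lemma conj_sqrtC {d : ℤ} (hd : d < 0) : (starRingEnd ℂ) (sqrtC d) = - sqrtC d := by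
  have h := sqrtC_sq d
  have h1 := congrArg Complex.re h
  have h2 := congrArg Complex.im h
  simp only [pow_two, Complex.mul_re, Complex.mul_im, Complex.intCast_re, Complex.intCast_im] at h1 h2
  have hd' : (d : ℝ) < 0 := by exact_mod_cast hd
  have hre : (sqrtC d).re = 0 := by
    have : (sqrtC d).re * (sqrtC d).im = 0 := by linarith
    rcases mul_eq_zero.mp this with h3 | h3
    · exact h3
    · rw [h3] at h1
      nlinarith [mul_self_nonneg (sqrtC d).re]
  apply Complex.ext <;> simp [hre]

/-- Elements of `ℚ(√d)` have the form `x + y √d`. -/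
lemma Qsqrt_coords {d : ℤ} (hd : d < 0) {z : ℂ} (hz : z ∈ Qsqrt d) :
    ∃ x y : ℚ, z = (x : ℂ) + (y : ℂ) * sqrtC d := by
  have hs := sqrtC_sq d
  unfold Qsqrt at hz
  induction hz using IntermediateField.adjoin_induction with
  | mem x hx => exact ⟨0, 1, by simp_all⟩
  | algebraMap x => exact ⟨x, 0, by simp⟩
  | add x y hx hy h1 h2 =>
    obtain ⟨a, b, rfl⟩ := h1
    obtain ⟨c, e, rfl⟩ := h2
    exact ⟨a + c, b + e, by push_cast; ring⟩
  | mul x y hx hy h1 h2 =>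
    obtain ⟨a, b, rfl⟩ := h1
    obtain ⟨c, e, rfl⟩ := h2
    exact ⟨a * c + b * e * d, a * e + b * c, by push_cast; rw [← hs]; ring⟩
  | inv x hx h1 =>
    obtain ⟨a, b, rfl⟩ := h1
    by_cases h0 : a ^ 2 - d * b ^ 2 = 0
    · have hdq : (d : ℚ) < 0 := by exact_mod_cast hd
      have hb : b = 0 := by
        by_contra hb
        have : 0 < b ^ 2 := by positivity
        nlinarith [sq_nonneg a]
      subst hb
      have ha : a = 0 := by simpa using h0
      exact ⟨0, 0, by simp [ha]⟩
    · refine ⟨a / (a ^ 2 - d * b ^ 2), - b / (a ^ 2 - d * b ^ 2), ?_⟩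
      have h0' : (a : ℂ) ^ 2 - d * (b : ℂ) ^ 2 ≠ 0 := by exact_mod_cast h0
      apply inv_eq_of_mul_eq_one_right
      have e : ((a : ℂ) + b * sqrtC d) * (a - b * sqrtC d) = a ^ 2 - d * b ^ 2 := by
        rw [← hs]; ring
      push_cast
      rw [← div_self h0', ← e]
      ring

lemma int_of_integral_rat {x : ℚ} (hx : IsIntegral ℤ (x : ℂ)) : ∃ n : ℤ, (n : ℚ) = x := by
  have : IsIntegral ℤ x :=
    (isIntegral_algebraMap_iff (R := ℤ) (A := ℚ) (B := ℂ) (algebraMap ℚ ℂ).injective).mp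
      (by simpa using hx)
  simpa using IsIntegrallyClosed.isIntegral_iff.mp this

lemma isIntegral_starRingEnd {z : ℂ} (hz : IsIntegral ℤ z) : IsIntegral ℤ ((starRingEnd ℂ) z) :=
  hz.map ((starRingEnd ℂ).toIntAlgHom)

/-- Trace and norm of an integral element of `ℚ(√d)` are rational integers. -/
lemma integral_coords {d : ℤ} (hd : d < 0) {x y : ℚ}
    (hz : IsIntegral ℤ ((x : ℂ) + (y : ℂ) * sqrtC d)) :
    ∃ T N : ℤ, (T : ℚ) = 2 * x ∧ (N : ℚ) = x ^ 2 - d * y ^ 2 := by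
  have hc := isIntegral_starRingEnd hz
  have hs := sqrtC_sq d
  have e : (starRingEnd ℂ) ((x : ℂ) + (y : ℂ) * sqrtC d) = x - y * sqrtC d := by
    rw [map_add, map_mul, conj_sqrtC hd]
    have h1 (w : ℚ) : (starRingEnd ℂ) (w : ℂ) = w := by simp
    rw [h1, h1]; ring
  rw [e] at hc
  have h1 := hz.add hc
  have h2 := hz.mul hc
  obtain ⟨T, hT⟩ := int_of_integral_rat (x := 2 * x) (by
    have e1 : ((2 * x : ℚ) : ℂ) = x + y * sqrtC d + (x - y * sqrtC d) := by push_cast; ring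
    rw [e1]; exact h1)
  obtain ⟨N, hN⟩ := int_of_integral_rat (x := x ^ 2 - d * y ^ 2)
    (by
    have e1 : ((x ^ 2 - d * y ^ 2 : ℚ) : ℂ) = (x + y * sqrtC d) * (x - y * sqrtC d) := by
      push_cast; rw [← hs]; ring
    rw [e1]; exact h2)
  exact ⟨T, N, hT, hN⟩

/-- In `ℂ`: the trace and norm with respect to conjugation. -/
lemma trace_norm {d : ℤ} (hd : d < 0) {z : ℂ} (hz : z ∈ Qsqrt d) (hi : IsIntegral ℤ z) :
    ∃ T N : ℤ, (T : ℂ) = z + (starRingEnd ℂ) z ∧ (N : ℂ) = z * (starRingEnd ℂ) z := by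
  obtain ⟨x, y, rfl⟩ := Qsqrt_coords hd hz
  obtain ⟨T, N, hT, hN⟩ := integral_coords hd hi
  have e : (starRingEnd ℂ) ((x : ℂ) + (y : ℂ) * sqrtC d) = x - y * sqrtC d := by
    rw [map_add, map_mul, conj_sqrtC hd]
    have h1 (w : ℚ) : (starRingEnd ℂ) (w : ℂ) = w := by simp
    rw [h1, h1]; ring
  have hT' : (T : ℂ) = 2 * x := by exact_mod_cast congrArg (Rat.cast : ℚ → ℂ) hT
  have hN' : (N : ℂ) = x ^ 2 - d * y ^ 2 := by exact_mod_cast congrArg (Rat.cast : ℚ → ℂ) hN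
  refine ⟨T, N, ?_, ?_⟩
  · rw [hT', e]; ring
  · rw [hN', e, ← sqrtC_sq d]; ring

/-- Integral elements of norm dividing one are `±1` when `d ≤ -5`. -/
lemma unit_eq {d : ℤ} (hd : d ≤ -5) (hsf : Squarefree d) {u v : ℂ}
    (hu : u ∈ Qsqrt d) (hv : v ∈ Qsqrt d) (hui : IsIntegral ℤ u) (hvi : IsIntegral ℤ v)
    (huv : u * v = 1) : u = 1 ∨ u = -1 := by
  have hd0 : d < 0 := by omega
  obtain ⟨x, y, rfl⟩ := Qsqrt_coords hd0 hu
  obtain ⟨T, N, hT, hN⟩ := integral_coords hd0 hui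
  obtain ⟨T', N', hT', hN'⟩ := trace_norm hd0 hv hvi
  obtain ⟨T2, N2, hT2, hN2⟩ := trace_norm hd0 hu hui
  have hNN : N2 * N' = 1 := by
    have : ((N2 * N' : ℤ) : ℂ) = 1 := by
      push_cast
      rw [hN2, hN', mul_mul_mul_comm, huv, ← map_mul, huv]; simp
    exact_mod_cast this
  have e : (starRingEnd ℂ) ((x : ℂ) + (y : ℂ) * sqrtC d) = x - y * sqrtC d := by
    rw [map_add, map_mul, conj_sqrtC hd0]
    have h1 (w : ℚ) : (starRingEnd ℂ) (w : ℂ) = w := by simp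
    rw [h1, h1]; ring
  have hN2' : (N2 : ℚ) = x ^ 2 - d * y ^ 2 := by
    have : (N2 : ℂ) = x ^ 2 - d * y ^ 2 := by
      rw [hN2, e, ← sqrtC_sq d]; ring
    exact_mod_cast this
  have hdq : (d : ℚ) ≤ -5 := by exact_mod_cast hd
  have hpos : (0 : ℚ) ≤ N2 := by rw [hN2']; nlinarith [sq_nonneg x, sq_nonneg y]
  have hpos' : 0 ≤ N2 := by exact_mod_cast hpos
  have hN1 : N2 = 1 := by
    rcases Int.eq_one_or_neg_one_of_mul_eq_one hNN with h | h <;> omega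
  rw [hN1] at hN2'
  have key : ((T ^ 2 - 4 : ℤ) : ℚ) = d * (2 * y) ^ 2 := by
    push_cast; rw [hT]; push_cast at hN2'; linarith
  have hzint : ∃ z : ℤ, (z : ℚ) = d * (2 * y) := by
    have : IsIntegral ℤ ((d : ℚ) * (2 * y)) := by
      apply IsIntegral.of_pow (n := 2) (by norm_num)
      have h3 : ((d : ℚ) * (2 * y)) ^ 2 = ((d * (T ^ 2 - 4) : ℤ) : ℚ) := by
        push_cast at key ⊢; rw [key]; ring
      rw [h3]
      exact isIntegral_algebraMap (R := ℤ) (A := ℚ)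
    simpa using IsIntegrallyClosed.isIntegral_iff.mp this
  obtain ⟨z, hz⟩ := hzint
  have hz2 : z ^ 2 = d * (T ^ 2 - 4) := by
    have : (z : ℚ) ^ 2 = d * ((T ^ 2 - 4 : ℤ) : ℚ) := by rw [hz, key]; ring
    exact_mod_cast this
  have hdz : d ∣ z := (hsf.dvd_pow_iff_dvd two_ne_zero).mp ⟨_, hz2⟩
  obtain ⟨w, rfl⟩ := hdz
  have hw2 : d * w ^ 2 = T ^ 2 - 4 := by
    apply mul_left_cancel₀ (show d ≠ 0 by omega)
    rw [← hz2]; ring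
  have hw0 : w = 0 := by
    by_contra hw
    have : 0 < w ^ 2 := by positivity
    nlinarith [sq_nonneg T]
  subst hw0
  have hy : y = 0 := by
    have : (d : ℚ) ≠ 0 := by linarith
    simp at hz
    rcases hz with h | h
    · omega
    · exact h
  subst hy
  have hx : (x - 1) * (x + 1) = 0 := by push_cast at hN2'; linarith
  rcases mul_eq_zero.mp hx with h | h
  · left; rw [sub_eq_zero.mp h]; simp
  · right; rw [eq_neg_of_add_eq_zero_left h]; simp

/-- Power sums of a conjugate pair, with the two congruences that are used. -/
lemma power_sums (g h : ℂ) (T N : ℤ) (hT : (T : ℂ) = g + h) (hN : (N : ℂ) = g * h) (k : ℕ) :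
    ∃ V W : ℤ, (V : ℂ) = g ^ (2 * k + 1) + h ^ (2 * k + 1) ∧
      (W : ℂ) = g ^ (2 * k + 2) + h ^ (2 * k + 2) ∧
      N ∣ V - T ^ (2 * k + 1) ∧ N ∣ W - T ^ (2 * k + 2) ∧ T ∣ V := by
  induction k with
  | zero =>
    refine ⟨T, T ^ 2 - 2 * N, by simp [hT], ?_, by simp, ⟨-2, by ring⟩, dvd_rfl⟩
    push_cast; rw [hT, hN]; ring
  | succ k ih =>
    obtain ⟨V, W, hV, hW, ⟨a, ha⟩, ⟨b, hb⟩, ⟨c, hc⟩⟩ := ih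
    refine ⟨T * W - N * V, T * (T * W - N * V) - N * W, ?_, ?_, ⟨T * b - V, ?_⟩,
      ⟨T * (T * b - V) - W, ?_⟩, ⟨W - N * c, ?_⟩⟩
    · push_cast; rw [hT, hN, hV, hW]; ring
    · push_cast; rw [hT, hN, hV, hW]; ring
    · have : W = T ^ (2 * k + 2) + N * b := by linarith
      rw [this]; ring
    · have : W = T ^ (2 * k + 2) + N * b := by linarith
      rw [this]; ring
    · rw [hc]; ring

/-- The arithmetic contradiction. -/
lemma arith_contra (q k : ℕ) (T : ℤ) (hk : 1 ≤ k) (hq : 4 ^ ((k + 1) * (2 * k + 1)) < q)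
    (h1 : T ∣ 2 ^ (k + 1)) (h2 : (q : ℤ) ∣ 2 ^ (k + 1) - T ^ (2 * k + 1)) : False := by
  have h3 : T.natAbs ∣ 2 ^ (k + 1) := by
    have := Int.natAbs_dvd_natAbs.mpr h1
    simpa [Int.natAbs_pow] using this
  obtain ⟨j, hj, hTj⟩ := (Nat.dvd_prime_pow Nat.prime_two).mp h3
  have hT2 : T ^ 2 = 4 ^ j := by
    rw [← Int.natAbs_sq, hTj]; push_cast; rw [← pow_mul, mul_comm, pow_mul]; norm_num
  have h4 : (q : ℤ) ∣ 4 ^ (k + 1) - 4 ^ (j * (2 * k + 1)) := by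
    have e : (4 : ℤ) ^ (k + 1) - 4 ^ (j * (2 * k + 1)) =
        (2 ^ (k + 1) - T ^ (2 * k + 1)) * (2 ^ (k + 1) + T ^ (2 * k + 1)) := by
      rw [pow_mul (4 : ℤ) j, ← hT2, show (4 : ℤ) ^ (k + 1) = (2 ^ (k + 1)) ^ 2 by
        rw [← pow_mul, mul_comm, pow_mul]; norm_num]; ring
    rw [e]; exact Dvd.dvd.mul_right h2 _
  have hle : j * (2 * k + 1) ≤ (k + 1) * (2 * k + 1) := Nat.mul_le_mul_right _ hj
  have hle2 : k + 1 ≤ (k + 1) * (2 * k + 1) := Nat.le_mul_of_pos_right _ (by omega)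
  have b1 : (4 : ℤ) ^ (j * (2 * k + 1)) ≤ 4 ^ ((k + 1) * (2 * k + 1)) :=
    pow_le_pow_right₀ (by norm_num) hle
  have b2 : (4 : ℤ) ^ (k + 1) ≤ 4 ^ ((k + 1) * (2 * k + 1)) :=
    pow_le_pow_right₀ (by norm_num) hle2
  have b3 : (0 : ℤ) < 4 ^ (j * (2 * k + 1)) := by positivity
  have b4 : (0 : ℤ) < 4 ^ (k + 1) := by positivity
  have hq' : (4 : ℤ) ^ ((k + 1) * (2 * k + 1)) < q := by exact_mod_cast hq
  have h0 := Int.eq_zero_of_abs_lt_dvd h4 (by rw [abs_lt]; constructor <;> linarith)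
  have h5 : (4 : ℤ) ^ (k + 1) = 4 ^ (j * (2 * k + 1)) := by linarith
  have h6 : k + 1 = j * (2 * k + 1) := Int.pow_right_injective (a := 4) (by norm_num) h5
  rcases Nat.eq_zero_or_pos j with rfl | hj0
  · omega
  · have : 2 * k + 1 ≤ j * (2 * k + 1) := Nat.le_mul_of_pos_left _ hj0
    omega

/-- `1 - q ^ t + n √d` is not a `p`-th power of an integer of `ℚ(√d)`. -/
lemma not_pow {d n : ℤ} {q t k : ℕ} (hd : d < 0) (ht : t ≠ 0) (hk : 1 ≤ k) (hqp : q.Prime)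
    (hq : 4 ^ ((k + 1) * (2 * k + 1)) < q) (hn : 1 - 2 * (q : ℤ) ^ t = n ^ 2 * d)
    {b : ℂ} (hb : b ∈ Qsqrt d) (hbi : IsIntegral ℤ b)
    (h : b ^ (2 * k + 1) = 1 - (q : ℂ) ^ t + n * sqrtC d) : False := by
  have hs := sqrtC_sq d
  have hnC : 1 - 2 * (q : ℂ) ^ t = n ^ 2 * d := by exact_mod_cast congrArg (Int.cast : ℤ → ℂ) hn
  have hsm : sqrtC d ∈ Qsqrt d := IntermediateField.mem_adjoin_simple_self ℚ _
  have hq0 : (q : ℂ) ≠ 0 := by exact_mod_cast hqp.ne_zero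
  have hsq : (1 + n * sqrtC d) ^ 2 = 2 * (1 - (q : ℂ) ^ t + n * sqrtC d) := by
    linear_combination (n : ℂ) ^ 2 * hs - hnC
  have hmul : (1 + n * sqrtC d) * (1 - n * sqrtC d) = 2 * (q : ℂ) ^ t := by
    linear_combination - (n : ℂ) ^ 2 * hs + hnC
  have hne : (1 + n * sqrtC d) ≠ 0 := by
    intro h0
    rw [h0, zero_mul] at hmul
    exact mul_ne_zero two_ne_zero (pow_ne_zero t hq0) hmul.symm
  have hb0 : b ≠ 0 := by
    rintro rfl
    rw [← h] at hsq
    simp at hsq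
    exact hne hsq
  have h2b : (2 * b) ≠ 0 := mul_ne_zero two_ne_zero hb0
  obtain ⟨g, hg⟩ : ∃ g : ℂ, g = 2 ^ k * (1 + n * sqrtC d) / (2 * b) ^ k := ⟨_, rfl⟩
  have hgm : g ∈ Qsqrt d := by
    rw [hg]
    have two : (2 : ℂ) ∈ Qsqrt d := ofNat_mem _ 2
    exact div_mem (mul_mem (pow_mem two _)
      (add_mem (one_mem _) (mul_mem (intCast_mem _ _) hsm))) (pow_mem (mul_mem two hb) _)
  have hgk : g * (2 * b) ^ k = 2 ^ k * (1 + n * sqrtC d) := by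
    rw [hg]; field_simp
  have hg2 : g ^ 2 = 2 * b := by
    have h3 : (2 * b) ^ (2 * k) ≠ 0 := pow_ne_zero _ h2b
    apply mul_right_cancel₀ h3
    calc g ^ 2 * (2 * b) ^ (2 * k) = (g * (2 * b) ^ k) ^ 2 := by ring
      _ = 2 ^ (2 * k) * (1 + n * sqrtC d) ^ 2 := by rw [hgk]; ring
      _ = 2 ^ (2 * k) * (2 * b ^ (2 * k + 1)) := by rw [hsq, h]
      _ = 2 * b * (2 * b) ^ (2 * k) := by ring
  have hgi : IsIntegral ℤ g := by
    apply IsIntegral.of_pow (n := 2) (by norm_num)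
    rw [hg2]
    have : IsIntegral ℤ (2 : ℂ) := by
      simpa using (isIntegral_algebraMap (R := ℤ) (A := ℂ) (x := 2))
    exact this.mul hbi
  have hgp : g ^ (2 * k + 1) = 2 ^ k * (1 + n * sqrtC d) := by
    rw [← hgk, ← hg2]; ring
  have hgc : ((starRingEnd ℂ) g) ^ (2 * k + 1) = 2 ^ k * (1 - n * sqrtC d) := by
    rw [← map_pow, hgp]
    simp only [map_mul, map_add, map_pow, map_one, conj_sqrtC hd, map_ofNat, map_intCast]
    ring
  obtain ⟨T, N, hT, hN⟩ := trace_norm hd hgm hgi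
  obtain ⟨V, W, hV, -, hNV, -, hTV⟩ := power_sums _ _ T N hT hN k
  have hV' : V = 2 ^ (k + 1) := by
    have : (V : ℂ) = 2 ^ (k + 1) := by rw [hV, hgp, hgc]; ring
    exact_mod_cast this
  have hNp : N ^ (2 * k + 1) = 2 ^ (2 * k + 1) * (q : ℤ) ^ t := by
    have : (N : ℂ) ^ (2 * k + 1) = 2 ^ (2 * k + 1) * (q : ℂ) ^ t := by
      rw [hN, mul_pow, hgp, hgc]
      linear_combination (2 : ℂ) ^ (2 * k) * hmul
    exact_mod_cast this
  have hqN : (q : ℤ) ∣ N := by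
    apply Int.Prime.dvd_pow' hqp (n := N) (k := 2 * k + 1) |> fun f => f ?_
    rw [hNp]
    exact Dvd.dvd.mul_left (dvd_pow_self _ ht) _
  rw [hV'] at hNV hTV
  exact arith_contra q k T hk hq hTV (hqN.trans hNV)

/-- The key divisibility. -/
lemma t_dvd_classNumber {d n : ℤ} {q t : ℕ} (hd : d ≤ -5) (hsf : Squarefree d)
    (ht : 3 ≤ t) (htodd : Odd t) (hqp : q.Prime) (hqodd : Odd q)
    (hq : 4 ^ ((t + 1) * t) < q) (hn : 1 - 2 * (q : ℤ) ^ t = n ^ 2 * d) :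
    t ∣ NumberField.classNumber (Qsqrt d) := by
  have hd0 : d < 0 := by omega
  have hs := sqrtC_sq d
  have hsm : sqrtC d ∈ Qsqrt d := IntermediateField.mem_adjoin_simple_self ℚ _
  -- the square root as an algebraic integer
  have hcoe : Function.Injective (algebraMap (Qsqrt d) ℂ) := (algebraMap (Qsqrt d) ℂ).injective
  obtain ⟨s, hsC⟩ : ∃ s : 𝓞 (Qsqrt d), (((s : Qsqrt d)) : ℂ) = sqrtC d := by
    refine ⟨⟨⟨sqrtC d, hsm⟩, ?_⟩, rfl⟩
    rw [mem_integralClosure_iff]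
    apply IsIntegral.of_pow (n := 2) (by norm_num)
    have : (⟨sqrtC d, hsm⟩ : Qsqrt d) ^ 2 = ((d : ℤ) : Qsqrt d) := by
      apply Subtype.ext
      push_cast
      exact hs
    rw [this]
    exact isIntegral_algebraMap (R := ℤ) (A := Qsqrt d)
  have hmem (z : 𝓞 (Qsqrt d)) : ((z : Qsqrt d) : ℂ) ∈ Qsqrt d := (z : Qsqrt d).2
  have hintegral (z : 𝓞 (Qsqrt d)) : IsIntegral ℤ ((z : Qsqrt d) : ℂ) :=
    (isIntegral_algebraMap_iff (R := ℤ) (A := Qsqrt d) (B := ℂ) hcoe).mpr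
      (NumberField.RingOfIntegers.isIntegral_coe z)
  have hinj : ∀ z w : 𝓞 (Qsqrt d), ((z : Qsqrt d) : ℂ) = ((w : Qsqrt d) : ℂ) → z = w := by
    intro z w h
    exact NumberField.RingOfIntegers.ext (Subtype.ext h)
  have hs2 : s ^ 2 = (d : 𝓞 (Qsqrt d)) := by
    apply hinj
    push_cast
    rw [hsC, hs]
    simp
  have hnO : 1 - 2 * (q : 𝓞 (Qsqrt d)) ^ t = n ^ 2 * d := by
    exact_mod_cast congrArg (Int.cast : ℤ → 𝓞 (Qsqrt d)) hn
  obtain ⟨a, ha⟩ : ∃ a : 𝓞 (Qsqrt d), a = 1 - (q : 𝓞 (Qsqrt d)) ^ t + n * s := ⟨_, rfl⟩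
  obtain ⟨a', ha'⟩ : ∃ a : 𝓞 (Qsqrt d), a = 1 - (q : 𝓞 (Qsqrt d)) ^ t - n * s := ⟨_, rfl⟩
  have haa : a * a' = ((q : 𝓞 (Qsqrt d)) ^ 2) ^ t := by
    rw [ha, ha', ← pow_mul, mul_comm 2 t, pow_mul]
    linear_combination - (n : 𝓞 (Qsqrt d)) ^ 2 * hs2 + hnO
  have hcop : IsCoprime a a' := by
    have hc : IsCoprime (2 * (1 - (q : ℤ) ^ t)) (((q : ℤ) ^ 2) ^ t) := by
      rw [← pow_mul]
      apply IsCoprime.pow_right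
      apply IsCoprime.mul_left
      · obtain ⟨r, rfl⟩ := hqodd
        exact ⟨-r, 1, by push_cast; ring⟩
      · exact ⟨1, (q : ℤ) ^ (t - 1), by
          rw [← pow_succ, Nat.sub_add_cancel (by omega)]; ring⟩
    obtain ⟨u, v, huv⟩ := hc
    have huvO : (u : 𝓞 (Qsqrt d)) * (2 * (1 - (q : 𝓞 (Qsqrt d)) ^ t))
        + v * ((q : 𝓞 (Qsqrt d)) ^ 2) ^ t = 1 := by
      exact_mod_cast congrArg (Int.cast : ℤ → 𝓞 (Qsqrt d)) huv
    refine ⟨u, u + v * a, ?_⟩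
    have hsum : a + a' = 2 * (1 - (q : 𝓞 (Qsqrt d)) ^ t) := by rw [ha, ha']; ring
    rw [← haa, ← hsum] at huvO
    linear_combination huvO
  have hq0 : (q : 𝓞 (Qsqrt d)) ≠ 0 := by exact_mod_cast hqp.ne_zero
  have ha0 : a ≠ 0 := by
    rintro h0
    rw [h0, zero_mul] at haa
    exact pow_ne_zero _ (pow_ne_zero _ hq0) haa.symm
  obtain ⟨B, hB⟩ : ∃ B : Ideal (𝓞 (Qsqrt d)), Ideal.span {a} = B ^ t := by
    apply exists_eq_pow_of_mul_eq_pow (b := Ideal.span {a'})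
      (c := Ideal.span {(q : 𝓞 (Qsqrt d)) ^ 2})
    · have := (Ideal.isCoprime_span_singleton_iff a a').mpr hcop
      exact (gcd_isUnit_iff_isRelPrime).mpr this.isRelPrime
    · rw [Ideal.span_singleton_mul_span_singleton, Ideal.span_singleton_pow, haa]
  have ht0 : t ≠ 0 := by omega
  have hB0 : B ≠ 0 := by
    rintro rfl
    rw [zero_pow ht0, Ideal.zero_eq_bot, Ideal.span_singleton_eq_bot] at hB
    exact ha0 hB
  have hBm : B ∈ nonZeroDivisors (Ideal (𝓞 (Qsqrt d))) := mem_nonZeroDivisors_of_ne_zero hB0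
  have hpow (m : ℕ) : (ClassGroup.mk0 ⟨B, hBm⟩) ^ m = 1 ↔ Submodule.IsPrincipal (B ^ m) := by
    rw [← map_pow, ← ClassGroup.mk0_eq_one_iff (pow_mem hBm m)]
    rfl
  have hord : orderOf (ClassGroup.mk0 ⟨B, hBm⟩) = t := by
    apply orderOf_eq_of_pow_and_pow_div_prime (by omega)
    · rw [hpow, ← hB]
      exact ⟨⟨a, rfl⟩⟩
    · intro p hp hpt h1
      rw [hpow] at h1
      obtain ⟨⟨b, hb⟩⟩ := h1
      have hb' : B ^ (t / p) = Ideal.span {b} := hb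
      have hbp : Ideal.span {b ^ p} = Ideal.span {a} := by
        rw [← Ideal.span_singleton_pow, ← hb', ← pow_mul, Nat.div_mul_cancel hpt, hB]
      obtain ⟨u, hu⟩ := Ideal.span_singleton_eq_span_singleton.mp hbp
      have hpodd : Odd p := htodd.of_dvd_nat hpt
      have hu1 : (((u : 𝓞 (Qsqrt d)) : Qsqrt d) : ℂ) = 1 ∨
          (((u : 𝓞 (Qsqrt d)) : Qsqrt d) : ℂ) = -1 := by
        apply unit_eq hd hsf (hmem _) (hmem ((u⁻¹ : (𝓞 (Qsqrt d))ˣ) : 𝓞 (Qsqrt d))) (hintegral _) (hintegral _)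
        have h2 : (u : 𝓞 (Qsqrt d)) * ((u⁻¹ : (𝓞 (Qsqrt d))ˣ) : 𝓞 (Qsqrt d)) = 1 := u.mul_inv
        have h3 := congrArg (fun z : 𝓞 (Qsqrt d) => ((z : Qsqrt d) : ℂ)) h2
        simpa only [map_mul, map_one, MulMemClass.coe_mul, OneMemClass.coe_one] using h3
      have hc : ∃ c : 𝓞 (Qsqrt d), c ^ p = a := by
        rcases hu1 with h | h
        · have : (u : 𝓞 (Qsqrt d)) = 1 := hinj _ _ (by rw [h]; simp)
          exact ⟨b, by rw [← hu, this, mul_one]⟩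
        · have : (u : 𝓞 (Qsqrt d)) = -1 := hinj _ _ (by rw [h]; simp)
          exact ⟨-b, by rw [← hu, this, hpodd.neg_pow]; ring⟩
      obtain ⟨c, hc⟩ := hc
      obtain ⟨k, hk⟩ := hpodd
      have hple : p ≤ t := Nat.le_of_dvd (by omega) hpt
      have hk1 : 1 ≤ k := by
        have := hp.two_le
        omega
      refine not_pow (d := d) (n := n) (q := q) (t := t) (k := k) hd0 ht0 hk1 hqp ?_ hn
        (hmem c) (hintegral c) ?_
      · refine lt_of_le_of_lt ?_ hq
        apply Nat.pow_le_pow_right (by norm_num)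
        apply Nat.mul_le_mul <;> omega
      · have h3 := congrArg (fun z : 𝓞 (Qsqrt d) => ((z : Qsqrt d) : ℂ)) (hc.trans ha)
        rw [hk] at h3
        simp at h3
        rw [h3, hsC]
  rw [NumberField.classNumber]
  conv_lhs => rw [← hord]
  exact orderOf_dvd_card

/-- Dirichlet's theorem supplies suitable primes. -/
lemma exists_primes (t M K : ℕ) (ht3 : 3 ≤ t) (htodd : Odd t) :
    ∃ l q : ℕ, M < l ∧ K < q ∧ l.Prime ∧ q.Prime ∧ ((l : ℤ) ∣ 2 * (q : ℤ) ^ t - 1) ∧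
      ¬ ((l : ℤ) ^ 2 ∣ 2 * (q : ℤ) ^ t - 1) := by
  have : NeZero t := ⟨by omega⟩
  have h2t : Nat.Coprime 2 t := (Nat.coprime_two_left).mpr htodd
  have h2u : IsUnit ((2 : ℕ) : ZMod t) := (ZMod.isUnit_iff_coprime 2 t).mpr h2t
  obtain ⟨l, hl, hlp, hlt⟩ := Nat.forall_exists_prime_gt_and_eq_mod h2u (M + t)
  have hlt' : l ≡ 2 [MOD t] := (ZMod.natCast_eq_natCast_iff _ _ _).mp hlt
  have hl1 : (l - 1).Coprime t := by
    have h1 : l - 1 ≡ 1 [MOD t] := by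
      apply Nat.ModEq.add_right_cancel' 1
      rw [Nat.sub_add_cancel hlp.one_le]
      exact hlt'
    have := h1.gcd_eq
    simpa [Nat.Coprime] using this
  have hlc : l.Coprime t := by
    rw [Nat.Prime.coprime_iff_not_dvd hlp]
    intro h
    have := Nat.le_of_dvd (by omega) h
    omega
  have : NeZero (l ^ 2) := ⟨pow_ne_zero _ hlp.ne_zero⟩
  have hcard : (Nat.card (ZMod (l ^ 2))ˣ).Coprime t := by
    rw [Nat.card_eq_fintype_card, ZMod.card_units_eq_totient, Nat.totient_prime_pow hlp (by norm_num)]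
    exact Nat.Coprime.mul_left (hlc.pow_left _) hl1
  have hu2 : IsUnit ((2 : ℕ) : ZMod (l ^ 2)) := by
    rw [ZMod.isUnit_iff_coprime]
    apply Nat.Coprime.pow_right
    rw [Nat.coprime_primes Nat.prime_two hlp]
    omega
  have hul : IsUnit ((1 + l : ℕ) : ZMod (l ^ 2)) := by
    rw [ZMod.isUnit_iff_coprime]
    apply Nat.Coprime.pow_right
    simp
  obtain ⟨u2, hu2⟩ := hu2
  obtain ⟨ul, hul⟩ := hul
  obtain ⟨x, hx⟩ := (powCoprime hcard).surjective (ul * u2⁻¹)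
  have hx' : x ^ t = ul * u2⁻¹ := by simpa using hx
  obtain ⟨q, hq, hqp, hqx⟩ := Nat.forall_exists_prime_gt_and_eq_mod x.isUnit K
  have hmod : ((2 * q ^ t : ℕ) : ZMod (l ^ 2)) = ((1 + l : ℕ) : ZMod (l ^ 2)) := by
    rw [Nat.cast_mul, Nat.cast_pow, hqx, ← Units.val_pow_eq_pow_val, hx', ← hu2, ← hul,
      ← Units.val_mul]
    congr 1
    rw [mul_comm ul, mul_inv_cancel_left]
  have hdvd : ((l ^ 2 : ℕ) : ℤ) ∣ 2 * (q : ℤ) ^ t - (1 + l) := by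
    rw [← ZMod.intCast_zmod_eq_zero_iff_dvd]
    push_cast at hmod ⊢
    rw [hmod, sub_self]
  push_cast at hdvd
  refine ⟨l, q, by omega, hq, hlp, hqp, ?_, ?_⟩
  · have h1 : (l : ℤ) ∣ 2 * (q : ℤ) ^ t - (1 + l) := (Dvd.intro_left _ (by ring : (l : ℤ) * l = l ^ 2)).trans hdvd
    have h2 := h1.add (dvd_refl (l : ℤ))
    have e : 2 * (q : ℤ) ^ t - (1 + l) + l = 2 * (q : ℤ) ^ t - 1 := by ring
    rwa [e] at h2
  · intro h
    have h2 := dvd_sub h hdvd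
    have h3 : (l : ℤ) ^ 2 ∣ l := by
      have e : 2 * (q : ℤ) ^ t - 1 - (2 * (q : ℤ) ^ t - (1 + l)) = l := by ring
      rwa [e] at h2
    have h4 : l ^ 2 ∣ l := by exact_mod_cast h3
    have h5 := Nat.le_of_dvd hlp.pos h4
    have := hlp.two_le
    nlinarith

/-- For a fixed odd square-free integer `t ≥ 3`, the family of imaginary quadratic fields
`ℚ(√(1 - 2 (q ^ r) ^ t))` (with `q` an odd prime and `r ≥ 1`), described via the square-free
parts `d` of the integers `1 - 2 (q ^ r) ^ t`, is infinite, and `t` divides the class number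
of every field in this family. -/
theorem infinite_family_with_t_dvd_classNumber
    (t : ℕ) (ht3 : 3 ≤ t) (htodd : Odd t) (htsf : Squarefree t) :
    {d : ℤ | Squarefree d ∧ d < 0 ∧
      (∃ q r : ℕ, q.Prime ∧ Odd q ∧ 0 < r ∧
        ∃ n : ℤ, 0 < n ∧ 1 - 2 * ((q : ℤ) ^ r) ^ t = n ^ 2 * d) ∧
      t ∣ NumberField.classNumber (Qsqrt d)}.Infinite := by
  apply Set.infinite_of_not_bddBelow
  rintro ⟨M, hM⟩
  obtain ⟨l, q, hl, hq, hlp, hqp, hd1, hd2⟩ :=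
    exists_primes t (M.natAbs + 5) (4 ^ ((t + 1) * t)) ht3 htodd
  have hq2 : 2 < q := by
    have : 4 ^ 1 ≤ 4 ^ ((t + 1) * t) := Nat.pow_le_pow_right (by norm_num) (by nlinarith)
    omega
  have hqodd : Odd q := hqp.odd_of_ne_two (by omega)
  have hqt : 1 ≤ q ^ t := Nat.one_le_pow _ _ hqp.pos
  obtain ⟨e, n, he, hn, hen, hsf⟩ := Nat.sq_mul_squarefree_of_pos (n := 2 * q ^ t - 1) (by omega)
  have henZ : (n : ℤ) ^ 2 * e = 2 * (q : ℤ) ^ t - 1 := by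
    have h1 : n ^ 2 * e + 1 = 2 * q ^ t := by omega
    have h2 : (n : ℤ) ^ 2 * e + 1 = 2 * (q : ℤ) ^ t := by exact_mod_cast h1
    linarith
  have hle : l ∣ e := by
    rw [← henZ] at hd1 hd2
    have hd1' : l ∣ n ^ 2 * e := by exact_mod_cast hd1
    rcases hlp.dvd_mul.mp hd1' with h | h
    · exfalso
      apply hd2
      have h3 : l ∣ n := hlp.dvd_of_dvd_pow h
      have h4 : (l : ℤ) ∣ n := by exact_mod_cast h3
      exact Dvd.dvd.mul_right (pow_dvd_pow_of_dvd h4 2) _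
    · exact h
  have hlee : l ≤ e := Nat.le_of_dvd he hle
  have hsfZ : Squarefree (-(e : ℤ)) := by
    rw [← Int.squarefree_natAbs]
    simpa using hsf
  have heq : 1 - 2 * (q : ℤ) ^ t = (n : ℤ) ^ 2 * (-(e : ℤ)) := by linarith
  have hmem : -(e : ℤ) ∈ {d : ℤ | Squarefree d ∧ d < 0 ∧
      (∃ q r : ℕ, q.Prime ∧ Odd q ∧ 0 < r ∧
        ∃ n : ℤ, 0 < n ∧ 1 - 2 * ((q : ℤ) ^ r) ^ t = n ^ 2 * d) ∧
      t ∣ NumberField.classNumber (Qsqrt d)} := by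
    refine ⟨hsfZ, by omega, ⟨q, 1, hqp, hqodd, one_pos, n, by exact_mod_cast hn, ?_⟩, ?_⟩
    · rw [pow_one]; exact heq
    · exact t_dvd_classNumber (by omega) hsfZ ht3 htodd hqp hqodd hq heq
  have := hM hmem
  omega
end

section
/- Let m ≥ 3 be an odd integer. The set of square-free negative integers d such that d is the square-free part of 1 − 2m^p for some prime p that divides the class number of ℚ(√(1 − 2m^p)) is infinite; i.e., for fixed m the collection of distinct imaginary quadratic fields ℚ(√(1 − 2m^p)) with p dividing the class number of ℚ(√(1 − 2m^p)) is infinite. -/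
open Polynomial NumberField

lemma aux_ideal {K : Type*} [Field K] [NumberField K] (p : ℕ) 
    (hp : p.Coprime (NumberField.classNumber K)) (x y z : 𝓞 K)
    (hxy : IsCoprime x y) (h : x * y = z ^ p) : ∃ (u : (𝓞 K)ˣ) (g : 𝓞 K), x = u * g ^ p := by
  have hc : IsCoprime (Ideal.span {x}) (Ideal.span {y}) :=
    (Ideal.isCoprime_span_singleton_iff x y).2 hxy
  have hI : Ideal.span {x} * Ideal.span {y} = Ideal.span {z} ^ p := by
    rw [Ideal.span_singleton_mul_span_singleton, h, Ideal.span_singleton_pow]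
  obtain ⟨B, hB⟩ := exists_eq_pow_of_mul_eq_pow_of_coprime hc hI
  have hBp : B.IsPrincipal := by
    refine Ideal.IsPrincipal.of_isPrincipal_pow_of_coprime (n := p) ?_ (I := B) ?_
    · simpa [NumberField.classNumber, Nat.card_eq_fintype_card] using hp
    · rw [← hB]; exact ⟨⟨x, rfl⟩⟩
  obtain ⟨g, hg⟩ := hBp.principal
  have hg' : B = Ideal.span {g} := hg
  rw [hg', Ideal.span_singleton_pow, Ideal.span_singleton_eq_span_singleton] at hB
  obtain ⟨u, hu⟩ := hB.symm
  exact ⟨u, g, by rw [← hu, mul_comm]⟩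

lemma aux_mem (D : ℤ) (hD : D < 0) (x : ℂ) (hx : x ∈ Qsqrt D) :
    ∃ a b : ℚ, x = a + b * sqrtC D := by
  have hs := sqrtC_sq D
  unfold Qsqrt at hx
  induction hx using IntermediateField.adjoin_induction with
  | mem x hx =>
    rw [Set.mem_singleton_iff] at hx
    exact ⟨0, 1, by simp [hx]⟩
  | algebraMap x => exact ⟨x, 0, by simp⟩
  | add x y hx hy h1 h2 =>
    obtain ⟨a, b, h1⟩ := h1
    obtain ⟨a', b', h2⟩ := h2
    exact ⟨a + a', b + b', by rw [h1, h2]; push_cast; ring⟩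
  | mul x y hx hy h1 h2 =>
    obtain ⟨a, b, h1⟩ := h1
    obtain ⟨a', b', h2⟩ := h2
    exact ⟨a * a' + b * b' * D, a * b' + a' * b, by
      rw [h1, h2]; push_cast; rw [← hs]; ring⟩
  | inv x hx h1 =>
    obtain ⟨a, b, h1⟩ := h1
    by_cases h0 : a ^ 2 - b ^ 2 * D = 0
    · have hD' : (D : ℚ) < 0 := by exact_mod_cast hD
      have hb : b = 0 := by
        by_contra hb
        have : 0 < b ^ 2 := by positivity
        nlinarith [sq_nonneg a]
      have ha : a = 0 := by
        subst hb
        simpa using h0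
      exact ⟨0, 0, by simp [h1, ha, hb]⟩
    · refine ⟨a / (a ^ 2 - b ^ 2 * D), -b / (a ^ 2 - b ^ 2 * D), ?_⟩
      have h0' : ((a : ℂ) ^ 2 - b ^ 2 * D) ≠ 0 := by exact_mod_cast h0
      apply inv_eq_of_mul_eq_one_right
      rw [h1]
      push_cast
      field_simp
      rw [← hs]; ring

lemma aux_conj (D : ℤ) (hD : D < 0) : (starRingEnd ℂ) (sqrtC D) = - sqrtC D := by
  have hs := sqrtC_sq D
  have h1 := congrArg Complex.re hs
  have h2 := congrArg Complex.im hs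
  simp [pow_two] at h1 h2
  have hD' : (D : ℝ) < 0 := by exact_mod_cast hD
  have : (sqrtC D).re = 0 := by
    by_contra h
    have : (sqrtC D).im = 0 := by
      have : (sqrtC D).re * (sqrtC D).im = 0 := by linarith
      exact (mul_eq_zero.1 this).resolve_left h
    rw [this] at h1
    nlinarith [mul_self_nonneg (sqrtC D).re]
  apply Complex.ext <;> simp [this]

lemma aux_int (q : ℚ) (h : IsIntegral ℤ (q : ℂ)) : ∃ n : ℤ, q = n := by
  have h2 : IsIntegral ℤ q := by
    have : IsIntegral ℤ (algebraMap ℚ ℂ q) := by simpa using h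
    exact (isIntegral_algebraMap_iff (algebraMap ℚ ℂ).injective).1 this
  obtain ⟨n, hn⟩ := IsIntegrallyClosed.isIntegral_iff.1 h2
  exact ⟨n, by simpa using hn.symm⟩

/-- trace, norm, discriminant of an integral element -/
lemma aux_TN (D : ℤ) (hD : D < 0) (x : ℂ) (hx : x ∈ Qsqrt D) (hi : IsIntegral ℤ x) :
    ∃ (T N : ℤ) (q : ℚ), x + (starRingEnd ℂ) x = T ∧ x * (starRingEnd ℂ) x = N ∧
      ((T : ℚ) ^ 2 - 4 * N = q ^ 2 * D) := by
  have hs := sqrtC_sq D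
  have hc := aux_conj D hD
  obtain ⟨a, b, hab⟩ := aux_mem D hD x hx
  have hic : IsIntegral ℤ ((starRingEnd ℂ) x) := by
    have := hi.map (Complex.conjAe.toAlgHom.restrictScalars ℤ)
    simpa using this
  have hcx : (starRingEnd ℂ) x = a - b * sqrtC D := by
    rw [hab]; simp [hc]; ring
  have e1 : x + (starRingEnd ℂ) x = ((2 * a : ℚ) : ℂ) := by
    rw [hcx, hab]; push_cast; ring
  have e2 : x * (starRingEnd ℂ) x = ((a ^ 2 - b ^ 2 * D : ℚ) : ℂ) := by
    rw [hcx, hab]; push_cast; rw [← hs]; ring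
  obtain ⟨T, hT⟩ := aux_int _ (e1 ▸ hi.add hic)
  obtain ⟨N, hN⟩ := aux_int _ (e2 ▸ hi.mul hic)
  refine ⟨T, N, 2 * b, ?_, ?_, ?_⟩
  · rw [e1, hT]; simp
  · rw [e2, hN]; simp
  · rw [← hT, ← hN]; ring

lemma aux_unit (D : ℤ) (hD : D < 0) (u v : ℂ) (hu : u ∈ Qsqrt D) (hiu : IsIntegral ℤ u)
    (hv : v ∈ Qsqrt D) (hiv : IsIntegral ℤ v) (huv : u * v = 1) : u ^ 12 = 1 := by
  obtain ⟨T, N, q, h1, h2, h3⟩ := aux_TN D hD u hu hiu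
  obtain ⟨T', N', q', h1', h2', h3'⟩ := aux_TN D hD v hv hiv
  have hN : N * N' = 1 := by
    have : (N : ℂ) * N' = 1 := by
      rw [← h2, ← h2']
      calc _ = (u * v) * (starRingEnd ℂ) (u * v) := by rw [map_mul]; ring
        _ = 1 := by rw [huv]; simp
    exact_mod_cast this
  have hNpos : 0 ≤ N := by
    rw [Complex.mul_conj] at h2
    have h2 : Complex.normSq u = (N : ℝ) := by exact_mod_cast h2
    have := Complex.normSq_nonneg u
    rw [h2] at this; exact_mod_cast this
  have hN1 : N = 1 := by
    rcases Int.eq_one_or_neg_one_of_mul_eq_one hN with h | h <;> omega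
  subst hN1
  have hT : T ^ 2 ≤ 4 := by
    have hD' : (D : ℚ) < 0 := by exact_mod_cast hD
    have : (T : ℚ) ^ 2 ≤ 4 := by push_cast at h3; nlinarith [sq_nonneg q]
    exact_mod_cast this
  have hquad : u ^ 2 = T * u - 1 := by
    have : (starRingEnd ℂ) u = T - u := by rw [← h1]; ring
    rw [this] at h2; push_cast at h2
    linear_combination -h2
  have hTl : -2 ≤ T := by nlinarith
  have hTu : T ≤ 2 := by nlinarith
  interval_cases T <;> push_cast at hquad
  · have : u + 1 = 0 := by
      have : (u + 1) ^ 2 = 0 := by linear_combination hquad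
      simpa using this
    have : u = -1 := by linear_combination this
    rw [this]; norm_num
  · have : u ^ 3 = 1 := by linear_combination (u - 1) * hquad
    calc u ^ 12 = (u ^ 3) ^ 4 := by ring
      _ = 1 := by rw [this]; norm_num
  · have : u ^ 2 = -1 := by linear_combination hquad
    calc u ^ 12 = (u ^ 2) ^ 6 := by ring
      _ = 1 := by rw [this]; norm_num
  · have : u ^ 3 = -1 := by linear_combination (u + 1) * hquad
    calc u ^ 12 = (u ^ 3) ^ 4 := by ring
      _ = 1 := by rw [this]; norm_num
  · have : u - 1 = 0 := by
      have : (u - 1) ^ 2 = 0 := by linear_combination hquad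
      simpa using this
    have : u = 1 := by linear_combination this
    rw [this]; norm_num

/-- Lucas sequence -/
def lucV (T N : ℤ) : ℕ → ℤ
  | 0 => 2
  | 1 => T
  | (n + 2) => T * lucV T N (n + 1) - N * lucV T N n

lemma lucV_eq {R : Type*} [CommRing R] (T N : ℤ) (a b : R) (h1 : a + b = T) (h2 : a * b = N) :
    ∀ n, (lucV T N n : R) = a ^ n + b ^ n
  | 0 => by simp [lucV]; norm_num
  | 1 => by simp [lucV, h1]
  | (n + 2) => by
    have i1 := lucV_eq T N a b h1 h2 (n + 1)
    have i2 := lucV_eq T N a b h1 h2 n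
    simp only [lucV]
    push_cast
    rw [i1, i2, ← h1, ← h2]
    ring

lemma lucV_dvd (T N : ℤ) : ∀ n, T ∣ lucV T N (2 * n + 1)
  | 0 => by simp [lucV]
  | (n + 1) => by
    have := lucV_dvd T N n
    have e : 2 * (n + 1) + 1 = (2 * n + 1) + 2 := by ring
    rw [e, lucV]
    exact dvd_sub (dvd_mul_right _ _) (this.mul_left _)

lemma lucV_modm (T N m : ℤ) (h : m ∣ N) : ∀ n, m ∣ lucV T N (n + 1) - T ^ (n + 1)
  | 0 => by simp [lucV]
  | (n + 1) => by
    have := lucV_modm T N m h n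
    rw [lucV]
    have e : T * lucV T N (n + 1) - N * lucV T N n - T ^ (n + 1 + 1) =
      T * (lucV T N (n + 1) - T ^ (n + 1)) - N * lucV T N n := by ring
    rw [e]
    exact dvd_sub (this.mul_left _) (h.mul_right _)

lemma lucV_modp (T N : ℤ) (p : ℕ) [Fact p.Prime] : ((lucV T N p : ℤ) : ZMod p) = T := by
  let F := AlgebraicClosure (ZMod p)
  have : CharP F p := charP_of_injective_algebraMap (algebraMap (ZMod p) F).injective p
  obtain ⟨a, ha⟩ := IsAlgClosed.exists_root (X ^ 2 - C (T : F) * X + C (N : F)) (by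
    have : (X ^ 2 - C (T : F) * X + C (N : F)).degree = 2 := by compute_degree!
    rw [this]; norm_num)
  simp [IsRoot] at ha
  have := lucV_eq (R := F) T N a (T - a) (by ring) (by linear_combination -ha) p
  rw [← add_pow_char, add_sub_cancel] at this
  apply (algebraMap (ZMod p) F).injective
  rw [map_intCast, map_intCast, this]
  have h2 : ((T : ZMod p)) ^ p = T := ZMod.pow_card _
  have := congrArg (algebraMap (ZMod p) F) h2
  rw [map_pow, map_intCast] at this
  exact this

lemma aux_two (T m D : ℤ) (q : ℚ) (k : ℕ) (hm : Odd m) (hD : D % 4 = 3) (hT : T ∣ 2 ^ k)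
    (h : (T : ℚ) ^ 2 - 8 * m = q ^ 2 * D) : T = 2 ∨ T = -2 := by
  have hint : q.den ^ 2 * (T ^ 2 - 8 * m) = q.num ^ 2 * D := by
    have hq : (q.den : ℚ) ≠ 0 := by exact_mod_cast q.den_nz
    have : (q.den : ℚ) ^ 2 * (T ^ 2 - 8 * m) = q.num ^ 2 * D := by
      rw [h]
      nth_rewrite 2 [← Rat.num_div_den q]
      field_simp
    exact_mod_cast this
  have hcop : ¬ ((2 : ℤ) ∣ q.num ∧ (2 : ℤ) ∣ q.den) := by
    rintro ⟨h1, h2⟩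
    have h1' : 2 ∣ q.num.natAbs := by omega
    have h2' : 2 ∣ q.den := by omega
    have := Nat.dvd_gcd h1' h2'
    rw [q.reduced] at this
    omega
  generalize q.num = u at hint hcop
  generalize (q.den : ℤ) = w at hint hcop
  obtain ⟨r, hr⟩ := hm
  obtain ⟨e, he⟩ : ∃ e, D = 4 * e + 3 := ⟨D / 4, by omega⟩
  have hn : T.natAbs ∣ 2 ^ k := by
    have := Int.natAbs_dvd_natAbs.2 hT
    simpa [Int.natAbs_pow] using this
  obtain ⟨j, -, hj⟩ := (Nat.dvd_prime_pow Nat.prime_two).1 hn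
  have hsq : T ^ 2 = (2 ^ j) ^ 2 := by
    rw [← Int.natAbs_sq, hj]; push_cast; rfl
  match j, hj, hsq with
  | 0, hj, hsq =>
    exfalso
    rw [hsq] at hint
    rcases Int.even_or_odd' w with ⟨a, ha | ha⟩ <;> rcases Int.even_or_odd' u with ⟨b, hb | hb⟩
    · exact hcop ⟨⟨b, hb⟩, ⟨a, ha⟩⟩
    all_goals
      subst ha hb he hr
      ring_nf at hint
      omega
  | 1, hj, hsq => omega
  | (i + 2), hj, hsq =>
    exfalso
    rw [hsq] at hint
    have e1 : ((2 : ℤ) ^ (i + 2)) ^ 2 - 8 * m = 8 * (2 * (2 ^ i) ^ 2 - m) := by ring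
    rw [e1] at hint
    generalize (2 : ℤ) ^ i = z at hint
    have hD2 : ¬ (2 : ℤ) ∣ D := by omega
    have hu : (2 : ℤ) ∣ u := by
      have : (2 : ℤ) ∣ u ^ 2 * D := ⟨w ^ 2 * (4 * (2 * z ^ 2 - m)), by rw [← hint]; ring⟩
      exact Int.prime_two.dvd_of_dvd_pow ((Int.prime_two.dvd_or_dvd this).resolve_right hD2)
    obtain ⟨u', rfl⟩ := hu
    have hint2 : w ^ 2 * (2 * (2 * z ^ 2 - m)) = u' ^ 2 * D := by linarith
    have hu' : (2 : ℤ) ∣ u' := by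
      have : (2 : ℤ) ∣ u' ^ 2 * D := ⟨w ^ 2 * (2 * z ^ 2 - m), by rw [← hint2]; ring⟩
      exact Int.prime_two.dvd_of_dvd_pow ((Int.prime_two.dvd_or_dvd this).resolve_right hD2)
    obtain ⟨u'', rfl⟩ := hu'
    have hint3 : w ^ 2 * (2 * z ^ 2 - m) = 2 * (u'' ^ 2 * D) := by linarith
    have hw : (2 : ℤ) ∣ w := by
      have : (2 : ℤ) ∣ w ^ 2 * (2 * z ^ 2 - m) := ⟨_, hint3⟩
      exact Int.prime_two.dvd_of_dvd_pow ((Int.prime_two.dvd_or_dvd this).resolve_right (by omega))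
    exact hcop ⟨dvd_mul_right _ _, hw⟩

lemma sqrtC_int (D : ℤ) : IsIntegral ℤ (sqrtC D) := by
  refine IsIntegral.of_pow (n := 2) (by norm_num) ?_
  rw [sqrtC_sq]
  exact isIntegral_algebraMap (R := ℤ) (x := D)

lemma sqrtC_mem (D : ℤ) : sqrtC D ∈ Qsqrt D :=
  IntermediateField.mem_adjoin_simple_self ℚ (sqrtC D)

lemma int_mem (D n : ℤ) : (n : ℂ) ∈ Qsqrt D := intCast_mem _ n

/-- Integral elements of the field lift to the ring of integers. -/
lemma exists_lift (D : ℤ) (x : ℂ) (hx : x ∈ Qsqrt D) (hi : IsIntegral ℤ x) :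
    ∃ y : 𝓞 (Qsqrt D), ((y : Qsqrt D) : ℂ) = x := by
  have : IsIntegral ℤ (⟨x, hx⟩ : Qsqrt D) := by
    rw [← isIntegral_algebraMap_iff (A := Qsqrt D) (B := ℂ) (algebraMap (Qsqrt D) ℂ).injective]
    exact hi
  exact ⟨⟨⟨x, hx⟩, this⟩, rfl⟩

lemma coe_int (D : ℤ) (y : 𝓞 (Qsqrt D)) : IsIntegral ℤ ((y : Qsqrt D) : ℂ) := by
  have := y.2
  exact (isIntegral_algebraMap_iff (A := Qsqrt D) (B := ℂ) (algebraMap (Qsqrt D) ℂ).injective).2 this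

lemma aux_beta (m : ℤ) (hm : 3 ≤ m) (hmodd : Odd m) (p : ℕ) (hp : p.Prime) (hp3 : 3 < p)
    (hcl : ¬ p ∣ NumberField.classNumber (Qsqrt (1 - 2 * m ^ p))) :
    ∃ g : ℂ, g ∈ Qsqrt (1 - 2 * m ^ p) ∧ IsIntegral ℤ g ∧
      (1 - m ^ p : ℂ) + sqrtC (1 - 2 * m ^ p) = g ^ p := by
  have hmp : 1 ≤ m ^ p := one_le_pow₀ (by omega)
  obtain ⟨D, hDdef⟩ : ∃ D, D = 1 - 2 * m ^ p := ⟨_, rfl⟩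
  rw [← hDdef] at hcl ⊢
  have hD : D < 0 := by omega
  have hs := sqrtC_sq D
  obtain ⟨s, hsy⟩ := exists_lift D (sqrtC D) (sqrtC_mem D) (sqrtC_int D)
  have hs2 : s ^ 2 = (D : 𝓞 (Qsqrt D)) := by
    apply RingOfIntegers.coe_injective
    apply Subtype.val_injective
    simp [hsy, hs]
  have hDc : (D : 𝓞 (Qsqrt D)) = 1 - 2 * (m : 𝓞 (Qsqrt D)) ^ p := by
    rw [hDdef]; push_cast; rfl
  have hprod : ((1 - m ^ p : 𝓞 (Qsqrt D)) + s) * ((1 - m ^ p : 𝓞 (Qsqrt D)) - s) =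
      ((m : 𝓞 (Qsqrt D)) ^ 2) ^ p := by
    rw [← pow_mul, mul_comm 2 p, pow_mul]
    linear_combination -hs2 - hDc
  have hcop : IsCoprime ((1 - m ^ p : 𝓞 (Qsqrt D)) + s) ((1 - m ^ p : 𝓞 (Qsqrt D)) - s) := by
    have h2 : IsCoprime (2 * (1 - m ^ p)) (m ^ p * m ^ p) := by
      have h2m : IsCoprime (2 : ℤ) (m ^ p) := by
        apply IsCoprime.pow_right
        obtain ⟨r, hr⟩ := hmodd
        exact ⟨-r, 1, by rw [hr]; ring⟩
      have h1m : IsCoprime (1 - m ^ p) (m ^ p) := ⟨1, 1, by ring⟩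
      exact (h2m.mul_left h1m).mul_right (h2m.mul_left h1m)
    obtain ⟨a, b, hab⟩ := h2
    have hab' := congrArg (Int.cast : ℤ → 𝓞 (Qsqrt D)) hab
    push_cast at hab'
    refine ⟨a + b * ((1 - m ^ p : 𝓞 (Qsqrt D)) - s), a, ?_⟩
    rw [← pow_mul, mul_comm 2 p, pow_mul] at hprod
    linear_combination hab' + b * hprod
  obtain ⟨u, g, hug⟩ := aux_ideal p ((Nat.Prime.coprime_iff_not_dvd hp).2 hcl) _ _ _ hcop hprod
  have hu12 : (((u : 𝓞 (Qsqrt D)) : Qsqrt D) : ℂ) ^ 12 = 1 := by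
    refine aux_unit D hD _ ((((u⁻¹ : (𝓞 (Qsqrt D))ˣ) : 𝓞 (Qsqrt D)) : Qsqrt D) : ℂ)
      (Subtype.mem _) (coe_int D _) (Subtype.mem _) (coe_int D _) ?_
    have := u.mul_inv
    have := congrArg (fun x : 𝓞 (Qsqrt D) => ((x : Qsqrt D) : ℂ)) this
    simpa using this
  have hug' := congrArg (fun x : 𝓞 (Qsqrt D) => ((x : Qsqrt D) : ℂ)) hug
  simp [hsy] at hug'
  refine ⟨(((u : 𝓞 (Qsqrt D)) : Qsqrt D) : ℂ) ^ p * ((g : Qsqrt D) : ℂ),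
    mul_mem (pow_mem (Subtype.mem _) _) (Subtype.mem _), ((coe_int D _).pow _).mul (coe_int D _), ?_⟩
  have hp2 : (((u : 𝓞 (Qsqrt D)) : Qsqrt D) : ℂ) ^ (p * p) = ((u : 𝓞 (Qsqrt D)) : Qsqrt D) := by
    have h2 : p % 2 ≠ 0 := fun h => by
      have := (Nat.prime_dvd_prime_iff_eq Nat.prime_two hp).1 (Nat.dvd_of_mod_eq_zero h); omega
    have h3 : p % 3 ≠ 0 := fun h => by
      have := (Nat.prime_dvd_prime_iff_eq Nat.prime_three hp).1 (Nat.dvd_of_mod_eq_zero h); omega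
    have : p * p % 12 = 1 := by
      have : p % 12 = 1 ∨ p % 12 = 5 ∨ p % 12 = 7 ∨ p % 12 = 11 := by omega
      rcases this with h | h | h | h <;> simp [Nat.mul_mod, h]
    rw [← Nat.div_add_mod (p * p) 12, this, pow_add, pow_mul, hu12]; simp
  rw [mul_pow, ← pow_mul, hp2, ← hug']

lemma aux_core (m : ℤ) (hm : 3 ≤ m) (hmodd : Odd m) (p : ℕ) (hp : p.Prime) (hp3 : 3 < p)
    (hcl : ¬ p ∣ NumberField.classNumber (Qsqrt (1 - 2 * m ^ p))) :
    ∃ T : ℤ, (T = 2 ∨ T = -2) ∧ lucV T (2 * m) p = 2 ^ (p / 2) * 2 := by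
  obtain ⟨g, hg, hgi, hgp⟩ := aux_beta m hm hmodd p hp hp3 hcl
  have hmp : 1 ≤ m ^ p := one_le_pow₀ (by omega)
  obtain ⟨D, hDdef⟩ : ∃ D, D = 1 - 2 * m ^ p := ⟨_, rfl⟩
  rw [← hDdef] at hg hgp
  have hD : D < 0 := by omega
  have hs := sqrtC_sq D
  have hDc : (D : ℂ) = 1 - 2 * (m : ℂ) ^ p := by rw [hDdef]; push_cast; rfl
  have hpodd : p = 2 * (p / 2) + 1 := by
    have := hp.eq_two_or_odd; omega
  obtain ⟨k, hk⟩ : ∃ k, k = p / 2 := ⟨_, rfl⟩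
  rw [← hk] at hpodd ⊢
  have hα : (1 + sqrtC D) ^ 2 = 2 * g ^ p := by
    rw [← hgp]; linear_combination hs + hDc
  have hαc : (1 + sqrtC D) * (starRingEnd ℂ) (1 + sqrtC D) = 2 * (m : ℂ) ^ p := by
    simp only [map_add, map_one, aux_conj D hD]
    linear_combination -hs - hDc
  have hm0 : (m : ℂ) ≠ 0 := by
    have : m ≠ 0 := by omega
    exact_mod_cast this
  have hα0 : (1 + sqrtC D) ≠ 0 := by
    intro h
    rw [h, zero_mul] at hαc
    exact (mul_ne_zero two_ne_zero (pow_ne_zero p hm0)) hαc.symm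
  have hg0 : g ≠ 0 := by
    intro h
    rw [h, zero_pow hp.ne_zero, mul_zero] at hα
    exact hα0 (by simpa using hα)
  obtain ⟨δ, hδdef⟩ : ∃ δ, δ = (1 + sqrtC D) / g ^ k := ⟨_, rfl⟩
  have hδmem : δ ∈ Qsqrt D := by
    rw [hδdef]
    exact div_mem (add_mem (one_mem _) (sqrtC_mem D)) (pow_mem hg _)
  have hδ2 : δ ^ 2 = 2 * g := by
    rw [hδdef, div_pow, hα]
    have : g ^ p = g * (g ^ k) ^ 2 := by
      nth_rewrite 1 [hpodd]; ring
    rw [this]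
    field_simp
  have hδi : IsIntegral ℤ δ := by
    refine IsIntegral.of_pow (n := 2) (by norm_num) ?_
    rw [hδ2]
    have h2i : IsIntegral ℤ (2 : ℂ) := by
      have := isIntegral_algebraMap (R := ℤ) (A := ℂ) (x := 2)
      simpa using this
    exact h2i.mul hgi
  have hδp : δ ^ p = 2 ^ k * (1 + sqrtC D) := by
    have : δ ^ p = (δ ^ 2) ^ k * δ := by nth_rewrite 1 [hpodd]; ring
    rw [this, hδ2, hδdef, mul_pow]
    field_simp
  obtain ⟨T, N, q, h1, h2, h3⟩ := aux_TN D hD δ hδmem hδi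
  have hN : N = 2 * m := by
    have : (N : ℂ) ^ p = (2 * m) ^ p := by
      rw [← h2, mul_pow, ← map_pow, hδp, map_mul]
      have e : (starRingEnd ℂ) (2 ^ k) = 2 ^ k := by rw [map_pow, Complex.conj_ofNat]
      rw [e]
      have e2 : (2 : ℂ) ^ p = 2 ^ k * 2 ^ k * 2 := by nth_rewrite 1 [hpodd]; ring
      rw [mul_pow, e2]
      linear_combination (2 ^ k * 2 ^ k) * hαc
    have h' : N ^ p = (2 * m) ^ p := by exact_mod_cast this
    exact (Odd.strictMono_pow (n := p) ⟨k, hpodd⟩).injective h'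
  subst hN
  have hV : lucV T (2 * m) p = 2 ^ k * 2 := by
    have := lucV_eq (R := ℂ) T (2 * m) δ ((starRingEnd ℂ) δ) h1 h2 p
    rw [← map_pow, hδp, map_mul] at this
    simp only [map_add, map_one, aux_conj D hD, map_pow, Complex.conj_ofNat] at this
    have : (lucV T (2 * m) p : ℂ) = 2 ^ k * 2 := by rw [this]; ring
    exact_mod_cast this
  refine ⟨T, ?_, hV⟩
  refine aux_two T m D q (k + 1) hmodd ?_ ?_ ?_
  · have : Odd (m ^ p) := hmodd.pow
    obtain ⟨r, hr⟩ := this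
    omega
  · have := lucV_dvd T (2 * m) k
    rw [← hpodd, hV] at this
    rwa [pow_succ]
  · rw [← h3]; push_cast; ring

/-- `2 ^ ((p-1)/2)` is the same sign mod `m` and mod `p`. -/
lemma aux_sign (m : ℤ) (hm : 3 ≤ m) (hmodd : Odd m) (p : ℕ) (hp : p.Prime) (hp3 : 3 < p)
    (hcl : ¬ p ∣ NumberField.classNumber (Qsqrt (1 - 2 * m ^ p))) :
    ∃ e : ℤ, (e = 1 ∨ e = -1) ∧ m ∣ 2 ^ (p / 2) - e ∧ (p : ℤ) ∣ 2 ^ (p / 2) - e := by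
  obtain ⟨T, hT, hV⟩ := aux_core m hm hmodd p hp hp3 hcl
  obtain ⟨e, he, hTe⟩ : ∃ e : ℤ, (e = 1 ∨ e = -1) ∧ T = 2 * e := by
    rcases hT with h | h
    · exact ⟨1, by simp, by omega⟩
    · exact ⟨-1, by simp, by omega⟩
  have hpodd : p = 2 * (p / 2) + 1 := by
    have := hp.eq_two_or_odd; omega
  refine ⟨e, he, ?_, ?_⟩
  · have h1 := lucV_modm T (2 * m) m (dvd_mul_left _ _) (p - 1)
    rw [Nat.sub_add_cancel hp.one_le, hV, hTe] at h1
    obtain ⟨k, hk⟩ : ∃ k, k = p / 2 := ⟨_, rfl⟩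
    rw [← hk] at hpodd h1 ⊢
    have hee : e ^ p = e := by
      rcases he with h | h
      · simp [h]
      · rw [h]; exact Odd.neg_one_pow ⟨k, hpodd⟩
    have e2 : (2 : ℤ) ^ k * 2 - (2 * e) ^ p = -(2 ^ k * 2 * e) * (2 ^ k - e) := by
      have hsq : e * e = 1 := by rcases he with h | h <;> simp [h]
      have h2p : (2 : ℤ) ^ p = 2 ^ k * 2 ^ k * 2 := by nth_rewrite 1 [hpodd]; ring
      rw [mul_pow, hee, h2p]
      linear_combination -(2 ^ k * 2) * hsq
    rw [e2] at h1
    refine IsCoprime.dvd_of_dvd_mul_left ?_ h1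
    have h2m : IsCoprime m 2 := by
      obtain ⟨r, hr⟩ := hmodd
      exact ⟨1, -r, by rw [hr]; ring⟩
    have hem : IsCoprime m e := by
      rcases he with h | h <;> rw [h]
      · exact isCoprime_one_right
      · exact isCoprime_one_right.neg_right
    exact ((h2m.pow_right.mul_right h2m).mul_right hem).neg_right
  · have : Fact p.Prime := ⟨hp⟩
    have h1 := lucV_modp T (2 * m) p
    rw [hV, hTe, ZMod.intCast_eq_intCast_iff_dvd_sub, ] at h1
    have e2 : 2 * e - 2 ^ (p / 2) * 2 = (-2) * (2 ^ (p / 2) - e) := by ring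
    rw [e2] at h1
    refine IsCoprime.dvd_of_dvd_mul_left ?_ h1
    have : IsCoprime (p : ℤ) 2 := by
      exact ⟨1, -(p / 2 : ℕ), by nth_rewrite 1 [hpodd]; push_cast; ring⟩
    exact this.neg_right

lemma aux_euler (p : ℕ) (hp : p.Prime) (hp3 : 3 < p) (h : p % 8 = 5 ∨ p % 8 = 7) (e : ℤ)
    (he : e = 1 ∨ e = -1) (hd : (p : ℤ) ∣ 2 ^ (p / 2) - e) : (p % 8 = 7 ↔ e = 1) := by
  have : Fact p.Prime := ⟨hp⟩
  have h2 : (2 : ZMod p) ≠ 0 := by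
    intro h0
    have : ((2 : ℕ) : ZMod p) = 0 := by exact_mod_cast h0
    rw [ZMod.natCast_eq_zero_iff] at this
    have := Nat.le_of_dvd (by norm_num) this
    omega
  have h1 : (2 : ZMod p) ^ (p / 2) = e := by
    have := (ZMod.intCast_zmod_eq_zero_iff_dvd _ p).2 hd
    push_cast at this
    linear_combination this
  have key := ZMod.euler_criterion p h2
  rw [ZMod.exists_sq_eq_two_iff (by omega), h1] at key
  have : p % 8 = 7 ↔ (e : ZMod p) = 1 := by rw [← key]; omega
  rw [this]
  rcases he with he | he <;> subst he
  · simp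
  · simp only [Int.cast_neg, Int.cast_one]
    constructor
    · intro h
      exfalso
      apply h2
      linear_combination -h
    · intro h; omega

lemma aux_dvd (m : ℤ) (hm : 3 ≤ m) (hmodd : Odd m) :
    ∃ r : ℕ, r.Coprime 8 ∧ ∀ p : ℕ, p.Prime → 3 < p → p ≡ r [MOD 8] →
      p ∣ NumberField.classNumber (Qsqrt (1 - 2 * m ^ p)) := by
  obtain ⟨M, rfl⟩ : ∃ M : ℕ, m = M := ⟨m.toNat, by omega⟩
  have cast : ∀ (k : ℕ) (e : ℤ), (M : ℤ) ∣ 2 ^ k - e → (2 : ZMod M) ^ k = e := by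
    intro k e h
    have := (ZMod.intCast_zmod_eq_zero_iff_dvd _ M).2 h
    push_cast at this
    linear_combination this
  rcases Nat.even_or_odd (orderOf (2 : ZMod M)) with hf | hf
  · refine ⟨7, by norm_num, fun p hp hp3 hmod => ?_⟩
    have hmod : p % 8 = 7 := hmod
    by_contra hcl
    obtain ⟨e, he, h1, h2⟩ := aux_sign M hm hmodd p hp hp3 hcl
    have he1 := (aux_euler p hp hp3 (by omega) e he h2).1 hmod
    subst he1
    have h3 := cast _ _ h1
    rw [Int.cast_one] at h3
    have h4 := orderOf_dvd_of_pow_eq_one h3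
    have h5 := hf.two_dvd.trans h4
    omega
  · refine ⟨5, by norm_num, fun p hp hp3 hmod => ?_⟩
    have hmod : p % 8 = 5 := hmod
    by_contra hcl
    obtain ⟨e, he, h1, h2⟩ := aux_sign M hm hmodd p hp hp3 hcl
    have he1 : e = -1 := by
      refine he.resolve_left fun h => ?_
      have := (aux_euler p hp hp3 (by omega) e he h2).2 h
      omega
    subst he1
    have h3 := cast _ _ h1
    push_cast at h3
    have h4 : (-1 : ZMod M) = 1 := by
      rw [← hf.neg_one_pow, ← h3, ← pow_mul, mul_comm, pow_mul, pow_orderOf_eq_one, one_pow]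
    have h5 : ((2 : ℕ) : ZMod M) = 0 := by push_cast; linear_combination -h4
    rw [ZMod.natCast_eq_zero_iff] at h5
    have := Nat.le_of_dvd (by norm_num) h5
    omega

lemma classNumber_congr (F G : IntermediateField ℚ ℂ) [NumberField F] [NumberField G]
    (h : F = G) : NumberField.classNumber F = NumberField.classNumber G := by
  subst h; rfl

lemma Qsqrt_eq (D n d : ℤ) (hn : 0 < n) (h : D = n ^ 2 * d) : Qsqrt D = Qsqrt d := by
  have hn0 : (n : ℂ) ≠ 0 := by exact_mod_cast hn.ne'
  have h1 : sqrtC D ^ 2 = (n * sqrtC d) ^ 2 := by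
    rw [mul_pow, sqrtC_sq, sqrtC_sq, h]; push_cast; ring
  have h2 : sqrtC D ∈ Qsqrt d := by
    have := mul_mem (int_mem d n) (sqrtC_mem d)
    rcases sq_eq_sq_iff_eq_or_eq_neg.1 h1 with h | h <;> rw [h]
    · exact this
    · exact neg_mem this
  have h3 : sqrtC d ∈ Qsqrt D := by
    have := div_mem (sqrtC_mem D) (int_mem D n)
    rcases sq_eq_sq_iff_eq_or_eq_neg.1 h1 with h | h
    · have e : sqrtC d = sqrtC D / n := by rw [h]; field_simp
      rw [e]; exact this
    · have e : sqrtC d = -(sqrtC D / n) := by rw [h]; field_simp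
      rw [e]; exact neg_mem this
  apply le_antisymm
  · exact IntermediateField.adjoin_simple_le_iff.2 h2
  · exact IntermediateField.adjoin_simple_le_iff.2 h3

lemma exists_sqfree (D : ℤ) (hD : D < 0) :
    ∃ d n : ℤ, Squarefree d ∧ d < 0 ∧ 0 < n ∧ D = n ^ 2 * d := by
  obtain ⟨a, b, hab, ha⟩ := Nat.sq_mul_squarefree D.natAbs
  have hb0 : b ≠ 0 := by rintro rfl; simp at hab; omega
  have ha0 : a ≠ 0 := ha.ne_zero
  refine ⟨-a, b, ?_, by omega, by omega, ?_⟩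
  · rw [← Int.squarefree_natAbs]; simpa using ha
  · have : (D.natAbs : ℤ) = b ^ 2 * a := by rw [← hab]; push_cast; ring
    linarith [Int.ofNat_natAbs_of_nonpos hD.le]

/-- For a fixed odd integer `m ≥ 3`, the collection of distinct imaginary quadratic fields
`ℚ(√(1 - 2 m ^ p))`, with `p` prime dividing the class number of `ℚ(√(1 - 2 m ^ p))`,
is infinite; the fields are described via the square-free parts `d` of `1 - 2 m ^ p`. -/
theorem infinite_collection_of_fields_with_p_dvd_classNumber
    (m : ℤ) (hm : 3 ≤ m) (hmodd : Odd m) :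
    {d : ℤ | Squarefree d ∧ d < 0 ∧
      ∃ p : ℕ, p.Prime ∧ (∃ n : ℤ, 0 < n ∧ 1 - 2 * m ^ p = n ^ 2 * d) ∧
        p ∣ NumberField.classNumber (Qsqrt (1 - 2 * m ^ p))}.Infinite := by
  intro hfin
  obtain ⟨r, hr, hdvd⟩ := aux_dvd m hm hmodd
  obtain ⟨B, hB⟩ := (hfin.image (fun d => NumberField.classNumber (Qsqrt d))).bddAbove
  obtain ⟨p, hpB, hp, hmod⟩ := Nat.forall_exists_prime_gt_and_modEq (max B 3) (by norm_num) hr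
  have hp3 : 3 < p := lt_of_le_of_lt (le_max_right _ _) hpB
  have hpB : B < p := lt_of_le_of_lt (le_max_left _ _) hpB
  have h := hdvd p hp hp3 hmod
  have hmp : 1 ≤ m ^ p := one_le_pow₀ (by omega)
  obtain ⟨d, n, hd, hd0, hn, hD⟩ := exists_sqfree (1 - 2 * m ^ p) (by omega)
  have hle : NumberField.classNumber (Qsqrt d) ≤ B :=
    hB ⟨d, ⟨hd, hd0, p, hp, ⟨n, hn, hD⟩, h⟩, rfl⟩
  rw [classNumber_congr _ _ (Qsqrt_eq _ n d hn hD)] at h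
  have hpos : 0 < NumberField.classNumber (Qsqrt d) := by
    unfold NumberField.classNumber
    exact Fintype.card_pos
  have := Nat.le_of_dvd hpos h
  omega
end
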